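/- For every H ∈ ℝ^{d×Kn}, the central-path loss satisfies the closed-form identity L(H) = (1/(2K)) tr( (Σ_W(H) + (λ_W/K) I_d) (Σ̃_T(H) + (λ_W/K) I_d)^{-1} ) + (λ_H/2) tr(Σ̃_T(H)) − (d − K)/(2K). -/

import Mathlib

open Matrix Filter
open scoped BigOperators

noncomputable section

variable {K n d : ℕ}

/-- The one-hot label matrix `Y = I_K ⊗ 1_nᵀ`: columns are indexed by class/sample pairs. -/
def Ymat (K n : ℕ) : Matrix (Fin K) (Fin K × Fin n) ℝ :=
  Matrix.of fun k p => if p.1 = k then 1 else 0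

/-- Squared Frobenius norm. -/
def frobSq {m p : Type*} [Fintype m] [Fintype p] (M : Matrix m p ℝ) : ℝ :=
  ∑ i, ∑ j, (M i j) ^ 2

/-- Frobenius norm. -/
def frobNorm {m p : Type*} [Fintype m] [Fintype p] (M : Matrix m p ℝ) : ℝ :=
  Real.sqrt (frobSq M)

/-- The unconstrained-features objective `g`. -/
def g (lW lH : ℝ) (W : Matrix (Fin K) (Fin d) ℝ)
    (H : Matrix (Fin d) (Fin K × Fin n) ℝ) : ℝ :=
  (1 / (2 * (K : ℝ) * n)) * frobSq (W * H - Ymat K n) +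
    (lW / (2 * (K : ℝ))) * frobSq W + (lH / (2 * (K : ℝ) * n)) * frobSq H

/-- Class means. -/
def classMean (H : Matrix (Fin d) (Fin K × Fin n) ℝ) (k : Fin K) : Fin d → ℝ :=
  fun a => (1 / (n : ℝ)) * ∑ i, H a (k, i)

/-- Global mean. -/
def globalMean (H : Matrix (Fin d) (Fin K × Fin n) ℝ) : Fin d → ℝ :=
  fun a => (1 / ((K : ℝ) * n)) * ∑ p, H a p

/-- Matrix of class means `H̄ ∈ ℝ^{d×K}`. -/
def Hbar (H : Matrix (Fin d) (Fin K × Fin n) ℝ) : Matrix (Fin d) (Fin K) ℝ :=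
  Matrix.of fun a k => classMean H k a

/-- `H̄ ⊗ 1_nᵀ`: the matrix whose n columns of class k all equal the class mean. -/
def HbarSpread (H : Matrix (Fin d) (Fin K × Fin n) ℝ) :
    Matrix (Fin d) (Fin K × Fin n) ℝ :=
  Matrix.of fun a p => classMean H p.1 a

/-- Within-class covariance. -/
def SigmaW (H : Matrix (Fin d) (Fin K × Fin n) ℝ) : Matrix (Fin d) (Fin d) ℝ :=
  Matrix.of fun a b =>
    (1 / ((K : ℝ) * n)) * ∑ p : Fin K × Fin n,
      (H a p - classMean H p.1 a) * (H b p - classMean H p.1 b)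

/-- Between-class covariance. -/
def SigmaB (H : Matrix (Fin d) (Fin K × Fin n) ℝ) : Matrix (Fin d) (Fin d) ℝ :=
  Matrix.of fun a b =>
    (1 / (K : ℝ)) * ∑ k : Fin K,
      (classMean H k a - globalMean H a) * (classMean H k b - globalMean H b)

/-- Non-centered total covariance. -/
def SigmaTtil (H : Matrix (Fin d) (Fin K × Fin n) ℝ) : Matrix (Fin d) (Fin d) ℝ :=
  (1 / ((K : ℝ) * n)) • (H * Hᵀ)

/-- Non-centered between-class covariance. -/
def SigmaBtil (H : Matrix (Fin d) (Fin K × Fin n) ℝ) : Matrix (Fin d) (Fin d) ℝ :=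
  Matrix.of fun a b => (1 / (K : ℝ)) * ∑ k : Fin K, classMean H k a * classMean H k b

/-- The closed-form optimal last-layer weights `W*(H)`. -/
def Wstar (lW : ℝ) (H : Matrix (Fin d) (Fin K × Fin n) ℝ) :
    Matrix (Fin K) (Fin d) ℝ :=
  Ymat K n * Hᵀ * (H * Hᵀ + ((n : ℝ) * lW) • (1 : Matrix (Fin d) (Fin d) ℝ))⁻¹

/-- The central-path loss `L(H)`. -/
def Lcp (lW lH : ℝ) (H : Matrix (Fin d) (Fin K × Fin n) ℝ) : ℝ :=
  (1 / (2 * (K : ℝ) * n)) * frobSq (Wstar lW H * H - Ymat K n) +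
    (lW / (2 * (K : ℝ))) * frobSq (Wstar lW H) +
    (lH / (2 * (K : ℝ) * n)) * frobSq H

/-- `A(H) = Σ̃_T(H) + (λ_W/K) I`. -/
def Amat (lW : ℝ) (H : Matrix (Fin d) (Fin K × Fin n) ℝ) : Matrix (Fin d) (Fin d) ℝ :=
  SigmaTtil H + (lW / (K : ℝ)) • 1

/-- The gradient of the central-path loss w.r.t. the Frobenius inner product. -/
def gradL (lW lH : ℝ) (H : Matrix (Fin d) (Fin K × Fin n) ℝ) :
    Matrix (Fin d) (Fin K × Fin n) ℝ :=
  (1 / ((K : ℝ) ^ 2 * n)) •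
    ((Amat lW H)⁻¹ * (H - HbarSpread H)
      - (Amat lW H)⁻¹ * (SigmaW H + (lW / (K : ℝ)) • 1) * (Amat lW H)⁻¹ * H
      + (lH * (K : ℝ)) • H)

/-- NC1 metric. -/
def NC1til (H : Matrix (Fin d) (Fin K × Fin n) ℝ) : ℝ :=
  (SigmaW H).trace / (SigmaB H).trace

/-!
Any `W` solving the normal equation `W (H Hᵀ + c I) = Y Hᵀ` has ridge-regression value
`‖W H - Y‖² + c ‖W‖² = ‖Y‖² - tr (W H Yᵀ)`. For the one-hot labels, `Y Hᵀ = n H̄ᵀ`, and with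
`A = Σ̃_T + (λ_W/K) I` the solution is `W = K⁻¹ H̄ᵀ A⁻¹`; cyclicity of the trace then turns
`tr (W H Yᵀ)` into `n tr (Σ̃_B A⁻¹)`. The law of total covariance `Σ̃_T = Σ_W + Σ̃_B` rewrites
`tr (Σ̃_B A⁻¹)` as `d - tr ((Σ_W + (λ_W/K) I) A⁻¹)`.
-/

section Frobenius

variable {m p q : Type*} [Fintype m] [Fintype p] [Fintype q]

theorem frobSq_eq_trace (M : Matrix m p ℝ) : frobSq M = (M * Mᵀ).trace := by
  simp [frobSq, Matrix.trace, Matrix.mul_apply, sq]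

theorem trace_mul_transpose_comm {R : Type*} [CommSemiring R] (M N : Matrix m p R) :
    (M * Nᵀ).trace = (N * Mᵀ).trace := by
  rw [← Matrix.trace_transpose, Matrix.transpose_mul, Matrix.transpose_transpose]

theorem frobSq_sub (M N : Matrix m p ℝ) :
    frobSq (M - N) = frobSq M - 2 * (M * Nᵀ).trace + frobSq N := by
  simp only [frobSq_eq_trace, Matrix.transpose_sub, Matrix.sub_mul, Matrix.mul_sub,
    Matrix.trace_sub, trace_mul_transpose_comm N M]
  ring

theorem frobSq_mul_sub_add_of_normal_eq [DecidableEq p] {W : Matrix m p ℝ} {X : Matrix p q ℝ}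
    {Y : Matrix m q ℝ} {c : ℝ} (hW : W * (X * Xᵀ + c • 1) = Y * Xᵀ) :
    frobSq (W * X - Y) + c * frobSq W = frobSq Y - (W * X * Yᵀ).trace := by
  have quadratic : frobSq (W * X) + c * frobSq W = (W * X * Yᵀ).trace :=
    calc frobSq (W * X) + c * frobSq W
        = (W * (X * Xᵀ + c • 1) * Wᵀ).trace := by
          simp only [frobSq_eq_trace, Matrix.transpose_mul, Matrix.mul_add, Matrix.add_mul,
            Matrix.mul_smul, Matrix.smul_mul, Matrix.mul_one, Matrix.trace_add,
            Matrix.trace_smul, smul_eq_mul, Matrix.mul_assoc]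
      _ = (Y * (W * X)ᵀ).trace := by rw [hW, Matrix.transpose_mul, Matrix.mul_assoc]
      _ = (W * X * Yᵀ).trace := trace_mul_transpose_comm Y (W * X)
  rw [frobSq_sub]
  linarith

end Frobenius

theorem sum_sub_mul_sub_of_sum_eq {ι R : Type*} [CommRing R] {s : Finset ι} {x y : ι → R}
    {a b : R} (hx : ∑ i ∈ s, x i = s.card * a) (hy : ∑ i ∈ s, y i = s.card * b) :
    ∑ i ∈ s, (x i - a) * (y i - b) = ∑ i ∈ s, x i * y i - s.card * (a * b) := by
  simp only [sub_mul, mul_sub, Finset.sum_sub_distrib, ← Finset.sum_mul, ← Finset.mul_sum,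
    hx, hy, Finset.sum_const, nsmul_eq_mul]
  ring

section ClassMeans

variable (H : Matrix (Fin d) (Fin K × Fin n) ℝ)

theorem sum_eq_card_mul_classMean (k : Fin K) (a : Fin d) :
    ∑ i, H a (k, i) = n * classMean H k a := by
  rcases eq_or_ne n 0 with rfl | hn
  · simp
  · rw [classMean, ← mul_assoc, mul_one_div_cancel (Nat.cast_ne_zero.mpr hn), one_mul]

theorem ymat_mul_transpose : Ymat K n * Hᵀ = (n : ℝ) • (Hbar H)ᵀ := by
  ext k a
  simp [Ymat, Hbar, Matrix.mul_apply, Fintype.sum_prod_type_right, sum_eq_card_mul_classMean]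

theorem mul_transpose_ymat : H * (Ymat K n)ᵀ = (n : ℝ) • Hbar H := by
  simpa using congrArg Matrix.transpose (ymat_mul_transpose H)

theorem frobSq_ymat (K n : ℕ) : frobSq (Ymat K n) = K * n := by
  rw [frobSq, Finset.sum_comm]
  simp [Ymat]

theorem sigmaBtil_eq_smul_hbar_mul_transpose :
    SigmaBtil H = (1 / (K : ℝ)) • (Hbar H * (Hbar H)ᵀ) := by
  ext a b
  simp [SigmaBtil, Hbar, Matrix.mul_apply]

theorem sigmaTtil_eq_sigmaW_add_sigmaBtil (hn : 0 < n) :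
    SigmaTtil H = SigmaW H + SigmaBtil H := by
  ext a b
  have within (k : Fin K) :
      ∑ i, (H a (k, i) - classMean H k a) * (H b (k, i) - classMean H k b) =
        ∑ i, H a (k, i) * H b (k, i) - n * (classMean H k a * classMean H k b) := by
    simpa using sum_sub_mul_sub_of_sum_eq
      (s := Finset.univ) (x := fun i ↦ H a (k, i)) (y := fun i ↦ H b (k, i))
      (by simpa using sum_eq_card_mul_classMean H k a)
      (by simpa using sum_eq_card_mul_classMean H k b)
  simp only [SigmaTtil, SigmaW, SigmaBtil, Matrix.add_apply, Matrix.smul_apply, smul_eq_mul,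
    Matrix.of_apply, Matrix.mul_apply, Matrix.transpose_apply, Fintype.sum_prod_type, within,
    Finset.sum_sub_distrib, ← Finset.mul_sum]
  field_simp
  ring

theorem frobSq_eq_card_mul_trace_sigmaTtil (hK : 0 < K) (hn : 0 < n) :
    frobSq H = K * n * (SigmaTtil H).trace := by
  rw [frobSq_eq_trace, SigmaTtil, Matrix.trace_smul, smul_eq_mul]
  field_simp

end ClassMeans

section CentralPath

theorem amat_posDef (hK : 0 < K) {lW : ℝ} (hlW : 0 < lW)
    (H : Matrix (Fin d) (Fin K × Fin n) ℝ) : (Amat lW H).PosDef := by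
  have hT : (SigmaTtil H).PosSemidef := by
    simpa [SigmaTtil] using (Matrix.posSemidef_self_mul_conjTranspose H).smul
      (by positivity : 0 ≤ 1 / ((K : ℝ) * n))
  exact Matrix.PosDef.posSemidef_add hT (Matrix.PosDef.one.smul (by positivity))

theorem mul_transpose_add_smul_one_eq_smul_amat (hK : 0 < K) (hn : 0 < n) (lW : ℝ)
    (H : Matrix (Fin d) (Fin K × Fin n) ℝ) :
    H * Hᵀ + (n * lW) • 1 = ((K : ℝ) * n) • Amat lW H := by
  rw [Amat, SigmaTtil, smul_add, smul_smul, smul_smul, mul_one_div_cancel (by positivity),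
    one_smul]
  congr 2
  field_simp

variable {lW : ℝ} {H : Matrix (Fin d) (Fin K × Fin n) ℝ}

theorem isUnit_mul_transpose_add_smul_one (hK : 0 < K) (hn : 0 < n) (hA : IsUnit (Amat lW H)) :
    IsUnit (H * Hᵀ + (n * lW) • (1 : Matrix (Fin d) (Fin d) ℝ)) := by
  have hKn : (K : ℝ) * n ≠ 0 := by positivity
  rw [mul_transpose_add_smul_one_eq_smul_amat hK hn]
  exact hA.smul (Units.mk0 _ hKn)

theorem wstar_normal_eq (hK : 0 < K) (hn : 0 < n) (hA : IsUnit (Amat lW H)) :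
    Wstar lW H * (H * Hᵀ + (n * lW) • 1) = Ymat K n * Hᵀ :=
  Matrix.nonsing_inv_mul_cancel_right _ _
    ((Matrix.isUnit_iff_isUnit_det _).mp (isUnit_mul_transpose_add_smul_one hK hn hA))

theorem wstar_eq_hbar_transpose_mul_inv (hK : 0 < K) (hn : 0 < n) (hA : IsUnit (Amat lW H)) :
    Wstar lW H = (1 / (K : ℝ)) • ((Hbar H)ᵀ * (Amat lW H)⁻¹) := by
  have hA_det := (Matrix.isUnit_iff_isUnit_det _).mp hA
  have normal_eq : ((K : ℝ) * n) • (Wstar lW H * Amat lW H) = (n : ℝ) • (Hbar H)ᵀ := by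
    rw [← Matrix.mul_smul, ← mul_transpose_add_smul_one_eq_smul_amat hK hn,
      wstar_normal_eq hK hn hA, ymat_mul_transpose]
  have mul_amat : Wstar lW H * Amat lW H = (1 / (K : ℝ)) • (Hbar H)ᵀ := by
    rw [(eq_inv_smul_iff₀ (by positivity)).mpr normal_eq, smul_smul]
    congr 1
    field_simp
  rw [← Matrix.smul_mul, ← mul_amat, Matrix.mul_nonsing_inv_cancel_right _ _ hA_det]

theorem trace_wstar_mul_mul_ymat_transpose (hK : 0 < K) (hn : 0 < n)
    (hA : IsUnit (Amat lW H)) :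
    (Wstar lW H * H * (Ymat K n)ᵀ).trace = n * (SigmaBtil H * (Amat lW H)⁻¹).trace := by
  rw [Matrix.mul_assoc, mul_transpose_ymat, wstar_eq_hbar_transpose_mul_inv hK hn hA,
    sigmaBtil_eq_smul_hbar_mul_transpose, Matrix.trace_mul_comm]
  simp only [Matrix.smul_mul, Matrix.mul_smul, Matrix.trace_smul, smul_eq_mul, Matrix.mul_assoc]
  ring

theorem trace_sigmaW_add_smul_one_mul_inv (hn : 0 < n) (hA : IsUnit (Amat lW H)) :
    ((SigmaW H + (lW / (K : ℝ)) • 1) * (Amat lW H)⁻¹).trace =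
      d - (SigmaBtil H * (Amat lW H)⁻¹).trace := by
  have hW : SigmaW H + (lW / (K : ℝ)) • 1 = Amat lW H - SigmaBtil H := by
    rw [Amat, sigmaTtil_eq_sigmaW_add_sigmaBtil H hn]
    abel
  rw [hW, Matrix.sub_mul, Matrix.mul_nonsing_inv _ ((Matrix.isUnit_iff_isUnit_det _).mp hA),
    Matrix.trace_sub, Matrix.trace_one, Fintype.card_fin]

end CentralPath

theorem central_path_loss_closed_form_general
    (K n d : ℕ) (hK : 0 < K) (hn : 0 < n) (lW lH : ℝ)
    (H : Matrix (Fin d) (Fin K × Fin n) ℝ) (hA : IsUnit (Amat lW H)) :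
    Lcp lW lH H
      = (1 / (2 * (K : ℝ))) *
          ((SigmaW H + (lW / (K : ℝ)) • (1 : Matrix (Fin d) (Fin d) ℝ)) *
            (SigmaTtil H + (lW / (K : ℝ)) • (1 : Matrix (Fin d) (Fin d) ℝ))⁻¹).trace
        + (lH / 2) * (SigmaTtil H).trace
        - ((d : ℝ) - K) / (2 * (K : ℝ)) := by
  have ridge : frobSq (Wstar lW H * H - Ymat K n) + n * lW * frobSq (Wstar lW H) =
      K * n - n * (SigmaBtil H * (Amat lW H)⁻¹).trace := by
    rw [frobSq_mul_sub_add_of_normal_eq (wstar_normal_eq hK hn hA), frobSq_ymat,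
      trace_wstar_mul_mul_ymat_transpose hK hn hA]
  calc Lcp lW lH H
      = (1 / (2 * (K : ℝ) * n)) *
            (frobSq (Wstar lW H * H - Ymat K n) + n * lW * frobSq (Wstar lW H))
          + (lH / (2 * (K : ℝ) * n)) * frobSq H := by
        rw [Lcp]
        field_simp
    _ = (1 / (2 * (K : ℝ))) * (d - (SigmaBtil H * (Amat lW H)⁻¹).trace)
          + (lH / 2) * (SigmaTtil H).trace - ((d : ℝ) - K) / (2 * (K : ℝ)) := by
        rw [ridge, frobSq_eq_card_mul_trace_sigmaTtil H hK hn]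
        field_simp
        ring
    _ = _ := by rw [← trace_sigmaW_add_smul_one_mul_inv hn hA, Amat]

/-- closed-form identity for the central-path loss:
`L(H) = (1/(2K)) tr((Σ_W + (λ_W/K)I)(Σ̃_T + (λ_W/K)I)⁻¹) + (λ_H/2) tr(Σ̃_T) − (d−K)/(2K)`. -/
theorem central_path_loss_closed_form
    (K n d : ℕ) (hK : 0 < K) (hn : 0 < n) (hdK : K ≤ d)
    (lW lH : ℝ) (hlW : 0 < lW) (hlH : 0 ≤ lH)
    (H : Matrix (Fin d) (Fin K × Fin n) ℝ) :
    Lcp lW lH H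
      = (1 / (2 * (K : ℝ))) *
          ((SigmaW H + (lW / (K : ℝ)) • (1 : Matrix (Fin d) (Fin d) ℝ)) *
            (SigmaTtil H + (lW / (K : ℝ)) • (1 : Matrix (Fin d) (Fin d) ℝ))⁻¹).trace
        + (lH / 2) * (SigmaTtil H).trace
        - ((d : ℝ) - K) / (2 * (K : ℝ)) := by
  exact central_path_loss_closed_form_general K n d hK hn lW lH H (amat_posDef hK hlW H).isUnit

end
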